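/- arXiv:0808.3064 — 7 statements merged into one kernel-verified Lean document; each statement's English description precedes it below -/
import Mathlib

section
/- Under hypotheses (i) and (ii), define A := (1/n)·Σ_ν γ^ν·γ_ν (sum over ν ∈ Fin n). Then for all indices α, β, μ ∈ Fin n one has: {γ^α, γ^β} = 2·g^{αβ}·A, σ^{αβ}·A = (1/4)·[γ^α, γ^β], A·σ^{αβ} = (1/4)·[γ^α, γ^β], and [γ^μ, A] = 0. -/
open Matrix BigOperators

/-!
Write `S^{μν} = {γ^μ, γ^ν}` and `T^{μsb} = {γ^μ, σ^{sb}}`. By hypothesis (ii), `T` is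
antisymmetric in `μ, s`, so any expression linear in `T^{μsb}` that is symmetrised over
`μ, ν, s` vanishes. Two such symmetrisations carry the argument.

* Symmetrising `[γ^ν, T^{μsb}]` gives `[σ^{sb}, S^{μν}] + cyclic(μ, ν, s) = 0`
  (`cyclic_commutator`). Evaluating the commutators by (i) leaves a relation linear in `S`
  with coefficients `g`, and its contraction over `μ, b` is `n S^{sν} = 2 n g^{sν} A`.
* Symmetrising `{γ^ν, T^{μsb}}` (`cyclic_anticommutator`) and inserting `S = 2 g A` gives
  `g^{μν} X^s + g^{νs} X^μ + g^{sμ} X^ν = 0` for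
  `X^s = 4 (A σ^{sb} + σ^{sb} A) - 2 [γ^s, γ^b]`.

A relation of the last shape forces `X = 0`, since its contraction is `(n + 2) X^s = 0`
(`eq_zero_of_cyclic`). The same lemma applied to the Jacobi-type identity
`[S^{μν}, γ^s] + cyclic = 0` shows that `A` commutes with every `γ^s`. By (i), `A` commutes with
`σ` as well: evaluating `[σ^{sb}, S^{μν}]` with `S = 2 g A` gives `0`. So `X = 0` is the
formula for `A σ`.
-/

section Contraction

variable {n : ℕ} {g ginv : Fin n → Fin n → ℂ} {M : Type*} [AddCommGroup M] [Module ℂ M]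

lemma contract_right (hg_symm : ∀ μ ν, g μ ν = g ν μ)
    (hg_inv' : ∀ μ ν, ∑ κ, ginv μ κ * g κ ν = if μ = ν then (1 : ℂ) else 0)
    (F : Fin n → M) (ν : Fin n) :
    ∑ μ, ∑ b, (ginv μ b * g ν b) • F μ = F ν := by
  have h : ∀ μ, ∑ b, (ginv μ b * g ν b) • F μ = (if μ = ν then (1 : ℂ) else 0) • F μ := by
    intro μ
    rw [← hg_inv' μ ν, Finset.sum_smul]
    exact Finset.sum_congr rfl fun b _ => by rw [hg_symm ν b]
  simp [h]

lemma contract_left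
    (hg_inv : ∀ μ ν, ∑ κ, g μ κ * ginv κ ν = if μ = ν then (1 : ℂ) else 0)
    (F : Fin n → M) (ν : Fin n) :
    ∑ μ, ∑ b, (ginv μ b * g ν μ) • F b = F ν := by
  rw [Finset.sum_comm]
  have h : ∀ b, ∑ μ, (ginv μ b * g ν μ) • F b = (if ν = b then (1 : ℂ) else 0) • F b := by
    intro b
    rw [← hg_inv ν b, Finset.sum_smul]
    exact Finset.sum_congr rfl fun μ _ => by rw [mul_comm]
  simp [h]

lemma contract_self (hg_symm : ∀ μ ν, g μ ν = g ν μ)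
    (hg_inv' : ∀ μ ν, ∑ κ, ginv μ κ * g κ ν = if μ = ν then (1 : ℂ) else 0) (x : M) :
    ∑ μ, ∑ b, (ginv μ b * g μ b) • x = (n : ℂ) • x := by
  have h : ∀ μ, ∑ b, (ginv μ b * g μ b) • x = x := by
    intro μ
    rw [← Finset.sum_smul, Finset.sum_congr rfl fun b _ => by rw [hg_symm μ b], hg_inv' μ μ]
    simp
  simp [h, Nat.cast_smul_eq_nsmul]

/-- The symmetrisation of `g ⊗ X` vanishes only if `X` does: contracting two of its indices
multiplies `X` by `n + 2`. -/
lemma eq_zero_of_cyclic (hg_symm : ∀ μ ν, g μ ν = g ν μ)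
    (hg_inv : ∀ μ ν, ∑ κ, g μ κ * ginv κ ν = if μ = ν then (1 : ℂ) else 0)
    (hg_inv' : ∀ μ ν, ∑ κ, ginv μ κ * g κ ν = if μ = ν then (1 : ℂ) else 0)
    (X : Fin n → M)
    (h : ∀ μ ν s, g μ ν • X s + g s ν • X μ + g s μ • X ν = 0) (s : Fin n) : X s = 0 := by
  have h1 : ∑ μ, ∑ ν, ginv μ ν • (g μ ν • X s + g s ν • X μ + g s μ • X ν) = 0 := by
    simp [h]
  simp only [smul_add, smul_smul, Finset.sum_add_distrib] at h1
  rw [contract_self hg_symm hg_inv', contract_right hg_symm hg_inv' X,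
    contract_left hg_inv X] at h1
  have h2 : ((n + 2 : ℕ) : ℂ) • X s = 0 := by
    rw [← h1]; push_cast; module
  exact (smul_eq_zero.mp h2).resolve_left (by exact_mod_cast (by omega : n + 2 ≠ 0))

lemma inverse_symm (hg_symm : ∀ μ ν, g μ ν = g ν μ)
    (hg_inv' : ∀ μ ν, ∑ κ, ginv μ κ * g κ ν = if μ = ν then (1 : ℂ) else 0) (a b : Fin n) :
    ginv a b = ginv b a := by
  have e : (Matrix.of ginv) * (Matrix.of g) = 1 := by
    ext i j; simp [Matrix.mul_apply, hg_inv', Matrix.one_apply]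
  have e2 : (Matrix.of g) * (Matrix.of ginv)ᵀ = 1 := by
    have gt : (Matrix.of g)ᵀ = Matrix.of g := by ext i j; simp [hg_symm i j]
    rw [← gt, ← Matrix.transpose_mul, e, Matrix.transpose_one]
  have e3 : Matrix.of ginv = (Matrix.of ginv)ᵀ := left_inv_eq_right_inv e e2
  exact congrFun (congrFun e3 a) b

end Contraction

section RingIdentities

variable {R : Type*} [Ring R]

/-- With `x, y, z = γ^μ, γ^ν, γ^s` and `a, b, c = σ^{μβ}, σ^{νβ}, σ^{sβ}`: the symmetrisation of
`[γ^ν, {γ^μ, σ^{sβ}}]`, rewritten by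
`[{x, c}, y] + [{y, c}, x] = [c, {x, y}] = {[c, x], y} + {[c, y], x}`. -/
lemma cyclic_commutator (x y z a b c : R)
    (h1 : (x * c + c * x) + (z * a + a * z) = 0)
    (h2 : (y * c + c * y) + (z * b + b * z) = 0)
    (h3 : (x * b + b * x) + (y * a + a * y) = 0) :
    ((c * x - x * c) * y + y * (c * x - x * c) + (c * y - y * c) * x + x * (c * y - y * c)) +
    ((a * y - y * a) * z + z * (a * y - y * a) + (a * z - z * a) * y + y * (a * z - z * a)) +
    ((b * z - z * b) * x + x * (b * z - z * b) + (b * x - x * b) * z + z * (b * x - x * b))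
      = 0 := by
  have e : ((c * x - x * c) * y + y * (c * x - x * c) + (c * y - y * c) * x
        + x * (c * y - y * c)) +
      ((a * y - y * a) * z + z * (a * y - y * a) + (a * z - z * a) * y + y * (a * z - z * a)) +
      ((b * z - z * b) * x + x * (b * z - z * b) + (b * x - x * b) * z + z * (b * x - x * b))
      = (((x * c + c * x) + (z * a + a * z)) * y - y * ((x * c + c * x) + (z * a + a * z))) +
        (((y * c + c * y) + (z * b + b * z)) * x - x * ((y * c + c * y) + (z * b + b * z))) +
        (((x * b + b * x) + (y * a + a * y)) * z - z * ((x * b + b * x) + (y * a + a * y))) := by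
    noncomm_ring
  rw [e, h1, h2, h3]; simp

/-- The symmetrisation of `{γ^ν, {γ^μ, σ^{sβ}}}`, in the notation of `cyclic_commutator`, with
each term rewritten by
`{y, {x, c}} + {x, {y, c}} = 2 {{x, y}, c} + [y, [c, x]] + [x, [c, y]]`. -/
lemma cyclic_anticommutator (x y z a b c : R)
    (h1 : (x * c + c * x) + (z * a + a * z) = 0)
    (h2 : (y * c + c * y) + (z * b + b * z) = 0)
    (h3 : (x * b + b * x) + (y * a + a * y) = 0) :
    (2 * ((x * y + y * x) * c + c * (x * y + y * x)) +
      (y * (c * x - x * c) - (c * x - x * c) * y + x * (c * y - y * c) - (c * y - y * c) * x)) +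
    (2 * ((y * z + z * y) * a + a * (y * z + z * y)) +
      (z * (a * y - y * a) - (a * y - y * a) * z + y * (a * z - z * a) - (a * z - z * a) * y)) +
    (2 * ((z * x + x * z) * b + b * (z * x + x * z)) +
      (x * (b * z - z * b) - (b * z - z * b) * x + z * (b * x - x * b) - (b * x - x * b) * z))
      = 0 := by
  have e : (2 * ((x * y + y * x) * c + c * (x * y + y * x)) +
      (y * (c * x - x * c) - (c * x - x * c) * y + x * (c * y - y * c) - (c * y - y * c) * x)) +
    (2 * ((y * z + z * y) * a + a * (y * z + z * y)) +
      (z * (a * y - y * a) - (a * y - y * a) * z + y * (a * z - z * a) - (a * z - z * a) * y)) +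
    (2 * ((z * x + x * z) * b + b * (z * x + x * z)) +
      (x * (b * z - z * b) - (b * z - z * b) * x + z * (b * x - x * b) - (b * x - x * b) * z))
      = (((x * c + c * x) + (z * a + a * z)) * y + y * ((x * c + c * x) + (z * a + a * z))) +
        (((y * c + c * y) + (z * b + b * z)) * x + x * ((y * c + c * y) + (z * b + b * z))) +
        (((x * b + b * x) + (y * a + a * y)) * z + z * ((x * b + b * x) + (y * a + a * y))) := by
    noncomm_ring
  rw [e, h1, h2, h3]; simp

end RingIdentities

theorem stmt_0
    (n N : ℕ) (hn : 1 ≤ n) (hN : 1 ≤ N)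
    (g ginv : Fin n → Fin n → ℂ)
    (hg_symm : ∀ μ ν, g μ ν = g ν μ)
    (hg_inv : ∀ μ ν, ∑ κ, g μ κ * ginv κ ν = if μ = ν then (1 : ℂ) else 0)
    (hg_inv' : ∀ μ ν, ∑ κ, ginv μ κ * g κ ν = if μ = ν then (1 : ℂ) else 0)
    (γ : Fin n → Matrix (Fin N) (Fin N) ℂ)
    (σ : Fin n → Fin n → Matrix (Fin N) (Fin N) ℂ)
    (hσ_anti : ∀ α β, σ α β = - σ β α)
    (hconst : ∀ μ s b, σ s b * γ μ - γ μ * σ s b = g μ b • γ s - g μ s • γ b)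
    (hanti : ∀ μ s b, (γ μ * σ s b + σ s b * γ μ) + (γ s * σ μ b + σ μ b * γ s) = 0)
    (A : Matrix (Fin N) (Fin N) ℂ)
    (hA : A = ((1 : ℂ) / n) • ∑ ν, γ ν * (∑ ρ, ginv ν ρ • γ ρ)) :
    ∀ α β μ : Fin n,
      γ α * γ β + γ β * γ α = (2 * g α β) • A ∧
      σ α β * A = ((1 : ℂ) / 4) • (γ α * γ β - γ β * γ α) ∧
      A * σ α β = ((1 : ℂ) / 4) • (γ α * γ β - γ β * γ α) ∧
      γ μ * A - A * γ μ = 0 := by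
  have hn0 : (n : ℂ) ≠ 0 := by exact_mod_cast (by omega : n ≠ 0)
  have hnA : ∑ μ, ∑ b, ginv μ b • (γ μ * γ b) = (n : ℂ) • A := by
    rw [hA, smul_smul, mul_one_div_cancel hn0, one_smul]
    simp [Finset.mul_sum]
  have hnA' : ∑ μ, ∑ b, ginv μ b • (γ b * γ μ) = (n : ℂ) • A := by
    rw [← hnA, Finset.sum_comm]
    refine Finset.sum_congr rfl fun i _ => Finset.sum_congr rfl fun j _ => ?_
    rw [inverse_symm hg_symm hg_inv' i j]
  obtain ⟨S, hS⟩ : ∃ S : Fin n → Fin n → Matrix (Fin N) (Fin N) ℂ,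
      ∀ a b, S a b = γ a * γ b + γ b * γ a := ⟨_, fun _ _ => rfl⟩
  have htr : ∑ μ, ∑ b, ginv μ b • S b μ = (2 * n : ℂ) • A := by
    simp only [hS, smul_add, Finset.sum_add_distrib, hnA, hnA']
    module
  -- The relation linear in `S` obtained by evaluating `cyclic_commutator` through (i).
  have hlin : ∀ μ b ν s, g μ b • S s ν + g ν b • S s μ + g s b • S μ ν
      - g s μ • S b ν - g s ν • S b μ - g ν μ • S b s = 0 := by
    intro μ b ν s
    have h := cyclic_commutator (γ μ) (γ ν) (γ s) (σ μ b) (σ ν b) (σ s b)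
      (hanti μ s b) (hanti ν s b) (hanti μ ν b)
    simp only [hconst] at h
    rw [hg_symm μ s, hg_symm μ ν, hg_symm ν s] at h
    simp only [sub_mul, mul_sub, smul_mul_assoc, mul_smul_comm] at h
    simp only [hS]
    linear_combination (norm := module) (1 / 2 : ℂ) • h
  have hcl : ∀ s ν, S s ν = (2 * g s ν) • A := by
    intro s ν
    have hsw : S ν s = S s ν := by rw [hS, hS, add_comm]
    have h : ∑ μ, ∑ b, ginv μ b • (g μ b • S s ν + g ν b • S s μ + g s b • S μ ν
      - g s μ • S b ν - g s ν • S b μ - g ν μ • S b s) = 0 := by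
      simp only [hlin, smul_zero, Finset.sum_const_zero]
    have htr' : ∑ μ, ∑ b, (ginv μ b * g s ν) • S b μ = (g s ν) • (2 * n : ℂ) • A := by
      rw [← htr]
      simp only [Finset.smul_sum, smul_smul, mul_comm]
    simp only [smul_add, smul_sub, smul_smul, Finset.sum_add_distrib,
      Finset.sum_sub_distrib] at h
    rw [contract_self hg_symm hg_inv', contract_right hg_symm hg_inv' (fun μ => S s μ),
      contract_right hg_symm hg_inv' (fun μ => S μ ν), contract_left hg_inv (fun b => S b ν),
      contract_left hg_inv (fun b => S b s), htr', hsw] at h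
    have h' : (n : ℂ) • (S s ν - (2 * g s ν) • A) = 0 := by
      linear_combination (norm := module) h
    exact sub_eq_zero.mp ((smul_eq_zero.mp h').resolve_left hn0)
  have hcl' : ∀ s ν, γ s * γ ν + γ ν * γ s = (2 * g s ν) • A := fun s ν => by rw [← hS, hcl]
  have hγA : ∀ s, γ s * A - A * γ s = 0 := by
    refine eq_zero_of_cyclic hg_symm hg_inv hg_inv' _ fun μ ν s => ?_
    have h : (γ s * (γ μ * γ ν + γ ν * γ μ) - (γ μ * γ ν + γ ν * γ μ) * γ s) +
        (γ μ * (γ s * γ ν + γ ν * γ s) - (γ s * γ ν + γ ν * γ s) * γ μ) +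
        (γ ν * (γ s * γ μ + γ μ * γ s) - (γ s * γ μ + γ μ * γ s) * γ ν) = 0 := by
      noncomm_ring
    simp only [hcl', smul_mul_assoc, mul_smul_comm] at h
    linear_combination (norm := module) (1 / 2 : ℂ) • h
  have hσA : ∀ s b, σ s b * A - A * σ s b = 0 := by
    intro s b
    have h : ∀ μ ν, g μ ν • (σ s b * A - A * σ s b) = 0 := by
      intro μ ν
      have e : σ s b * (γ μ * γ ν + γ ν * γ μ) - (γ μ * γ ν + γ ν * γ μ) * σ s b
          = ((σ s b * γ μ - γ μ * σ s b) * γ ν + γ ν * (σ s b * γ μ - γ μ * σ s b))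
          + ((σ s b * γ ν - γ ν * σ s b) * γ μ + γ μ * (σ s b * γ ν - γ ν * σ s b)) := by
        noncomm_ring
      simp only [hconst] at e
      simp only [hcl', sub_mul, mul_sub, smul_mul_assoc, mul_smul_comm] at e
      have e1 := hcl' s ν
      have e2 := hcl' b ν
      have e3 := hcl' s μ
      have e4 := hcl' b μ
      rw [hg_symm s μ] at e3
      rw [hg_symm b μ] at e4
      rw [hg_symm ν b, hg_symm ν s] at e
      linear_combination (norm := module) (1 / 2 : ℂ) • e + (g μ b / 2) • e1 - (g μ s / 2) • e2
        + (g b ν / 2) • e3 - (g s ν / 2) • e4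
    have h' := contract_self hg_symm hg_inv' (σ s b * A - A * σ s b)
    simp only [mul_smul, h, smul_zero, Finset.sum_const_zero] at h'
    exact (smul_eq_zero.mp h'.symm).resolve_left hn0
  have hX : ∀ s b, (4 : ℂ) • (A * σ s b + σ s b * A) - (2 : ℂ) • (γ s * γ b - γ b * γ s) = 0 := by
    intro s b
    refine eq_zero_of_cyclic hg_symm hg_inv hg_inv'
      (fun s => (4 : ℂ) • (A * σ s b + σ s b * A) - (2 : ℂ) • (γ s * γ b - γ b * γ s))
      (fun μ ν s => ?_) s
    have h := cyclic_anticommutator (γ μ) (γ ν) (γ s) (σ μ b) (σ ν b) (σ s b)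
      (hanti μ s b) (hanti ν s b) (hanti μ ν b)
    simp only [hconst, hcl'] at h
    rw [hg_symm μ s, hg_symm ν s, hg_symm ν μ] at h
    simp only [sub_mul, mul_sub, smul_mul_assoc, mul_smul_comm, two_mul] at h
    linear_combination (norm := module) h
  intro α β μ
  have h1 := hX α β
  have h2 := hσA α β
  refine ⟨hcl' α β, ?_, ?_, hγA μ⟩
  · linear_combination (norm := module) (1 / 8 : ℂ) • h1 + (1 / 2 : ℂ) • h2
  · linear_combination (norm := module) (1 / 8 : ℂ) • h1 - (1 / 2 : ℂ) • h2
end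

section
/- Under hypotheses (i) and (ii), for all μ, ν, β ∈ Fin n one has the matrix identity 2·(σ^{μν}·γ^β + σ^{βν}·γ^μ) = g^{μν}·γ^β + g^{βν}·γ^μ − 2·g^{μβ}·γ^ν. -/
open Matrix BigOperators

theorem stmt_2
    (n N : ℕ) (hn : 1 ≤ n) (hN : 1 ≤ N)
    (g ginv : Fin n → Fin n → ℂ)
    (hg_symm : ∀ μ ν, g μ ν = g ν μ)
    (hg_inv : ∀ μ ν, ∑ κ, g μ κ * ginv κ ν = if μ = ν then (1 : ℂ) else 0)
    (hg_inv' : ∀ μ ν, ∑ κ, ginv μ κ * g κ ν = if μ = ν then (1 : ℂ) else 0)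
    (γ : Fin n → Matrix (Fin N) (Fin N) ℂ)
    (σ : Fin n → Fin n → Matrix (Fin N) (Fin N) ℂ)
    (hσ_anti : ∀ α β, σ α β = - σ β α)
    (hconst : ∀ μ s b, σ s b * γ μ - γ μ * σ s b = g μ b • γ s - g μ s • γ b)
    (hanti : ∀ μ s b, (γ μ * σ s b + σ s b * γ μ) + (γ s * σ μ b + σ μ b * γ s) = 0) :
    ∀ μ ν β : Fin n,
      (2 : ℂ) • (σ μ ν * γ β + σ β ν * γ μ) =
        g μ ν • γ β + g β ν • γ μ - (2 * g μ β) • γ ν := by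
  intro μ ν β
  -- `2σγ = {γ, σ} + [σ, γ]`: complete antisymmetry cancels the two anticommutators,
  -- and the constancy condition evaluates the two commutators.
  have hsymm : g μ β • γ ν = g β μ • γ ν := by rw [hg_symm μ β]
  linear_combination (norm := module) hconst β μ ν + hconst μ β ν + hanti β μ ν + hsymm
end

section
/- Under hypotheses (i) and (ii), for all α, β ∈ Fin n one has ((n−1)/2)·[γ^β, γ^α] = Σ_ν σ^{βν}·[γ_ν, γ^α] + γ^β·γ^α − g^{αβ}·(Σ_ν γ^ν·γ_ν), where the sums are over ν ∈ Fin n. -/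
/-!
Write `γ_ν = ∑ ρ, ginv ν ρ • γ ρ`. The key fact is the contraction identity
`∑ ν, σ^{βν} γ_ν = ((n - 1) / 2) γ^β`. The constancy condition `hconst`, contracted, gives
`∑ ν, [σ^{βν}, γ_ν] = (n - 1) γ^β` (`sum_commutator`). By `hanti` the anticommutator
`{γ^μ, σ^{sb}}` is totally antisymmetric, so its contraction with the symmetric `ginv` vanishes:
`∑ ν, {σ^{βν}, γ_ν} = 0` (`sum_anticommutator`). Adding the two gives twice the contraction.

The identity follows by expanding `σ^{βν} [γ_ν, γ^α]`: the first term is the contraction times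
`γ^α`; in the second, `hconst` moves `γ^α` to the left of `σ^{βν}`, which leaves `γ^α` times the
contraction together with the two metric terms.
-/

open Matrix BigOperators

/-- The inverse of a symmetric array is symmetric. -/
theorem ginv_symm {n : ℕ} {g ginv : Fin n → Fin n → ℂ}
    (hg_symm : ∀ μ ν, g μ ν = g ν μ)
    (hg_inv : ∀ μ ν, ∑ κ, g μ κ * ginv κ ν = if μ = ν then (1 : ℂ) else 0)
    (μ ν : Fin n) : ginv μ ν = ginv ν μ := by
  have h1 : Matrix.of g * Matrix.of ginv = 1 := by
    ext i j
    simp [Matrix.mul_apply, Matrix.one_apply, hg_inv]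
  have hs : (Matrix.of g)ᵀ = Matrix.of g := by
    ext i j
    simp [hg_symm j i]
  have h2 : (Matrix.of ginv)ᵀ * Matrix.of g = 1 := by
    rw [← hs, ← Matrix.transpose_mul, h1, Matrix.transpose_one]
  have h3 : (Matrix.of ginv)ᵀ = Matrix.of ginv := left_inv_eq_right_inv h2 h1
  exact (congrFun (congrFun h3 ν) μ)

/-- Raising the index of `γ_ν` recovers `γ^α`. -/
theorem sum_raise {n N : ℕ} {g ginv : Fin n → Fin n → ℂ}
    (hg_inv : ∀ μ ν, ∑ κ, g μ κ * ginv κ ν = if μ = ν then (1 : ℂ) else 0)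
    (γ : Fin n → Matrix (Fin N) (Fin N) ℂ) (α : Fin n) :
    ∑ ν, g α ν • ∑ ρ, ginv ν ρ • γ ρ = γ α := by
  simp_rw [Finset.smul_sum, smul_smul]
  rw [Finset.sum_comm]
  simp_rw [← Finset.sum_smul, hg_inv]
  simp

/-- The contraction of the constancy condition. -/
theorem sum_commutator {n N : ℕ} {g ginv : Fin n → Fin n → ℂ}
    (hg_inv' : ∀ μ ν, ∑ κ, ginv μ κ * g κ ν = if μ = ν then (1 : ℂ) else 0)
    {γ : Fin n → Matrix (Fin N) (Fin N) ℂ}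
    {σ : Fin n → Fin n → Matrix (Fin N) (Fin N) ℂ}
    (hconst : ∀ μ s b, σ s b * γ μ - γ μ * σ s b = g μ b • γ s - g μ s • γ b)
    (β : Fin n) :
    ∑ ν, (σ β ν * (∑ ρ, ginv ν ρ • γ ρ) - (∑ ρ, ginv ν ρ • γ ρ) * σ β ν)
      = ((n : ℂ) - 1) • γ β := by
  have h : ∀ ν, σ β ν * (∑ ρ, ginv ν ρ • γ ρ) - (∑ ρ, ginv ν ρ • γ ρ) * σ β ν
      = γ β - (if ν = β then (1 : ℂ) else 0) • γ ν := by
    intro ν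
    simp_rw [Finset.mul_sum, Finset.sum_mul, Matrix.mul_smul, Matrix.smul_mul]
    rw [← Finset.sum_sub_distrib]
    simp_rw [← smul_sub, hconst, smul_sub, smul_smul]
    rw [Finset.sum_sub_distrib, ← Finset.sum_smul, ← Finset.sum_smul, hg_inv', hg_inv']
    simp
  simp_rw [h]
  rw [Finset.sum_sub_distrib]
  simp [sub_smul, Nat.cast_smul_eq_nsmul]

/-- The contraction of the totally antisymmetric anticommutator with the symmetric `ginv`
vanishes. -/
theorem sum_anticommutator {n N : ℕ} {ginv : Fin n → Fin n → ℂ}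
    (hsymm : ∀ μ ν, ginv μ ν = ginv ν μ)
    {γ : Fin n → Matrix (Fin N) (Fin N) ℂ}
    {σ : Fin n → Fin n → Matrix (Fin N) (Fin N) ℂ}
    (hσ_anti : ∀ α β, σ α β = - σ β α)
    (hanti : ∀ μ s b, (γ μ * σ s b + σ s b * γ μ) + (γ s * σ μ b + σ μ b * γ s) = 0)
    (β : Fin n) :
    ∑ ν, (σ β ν * (∑ ρ, ginv ν ρ • γ ρ) + (∑ ρ, ginv ν ρ • γ ρ) * σ β ν) = 0 := by
  have h : ∀ ν, σ β ν * (∑ ρ, ginv ν ρ • γ ρ) + (∑ ρ, ginv ν ρ • γ ρ) * σ β ν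
      = ∑ ρ, ginv ν ρ • (γ ρ * σ β ν + σ β ν * γ ρ) := by
    intro ν
    simp_rw [Finset.mul_sum, Finset.sum_mul, Matrix.mul_smul, Matrix.smul_mul]
    rw [← Finset.sum_add_distrib]
    exact Finset.sum_congr rfl fun ρ _ => by rw [smul_add, add_comm]
  have hA : ∀ ν ρ, γ ρ * σ β ν + σ β ν * γ ρ = -(γ ν * σ β ρ + σ β ρ * γ ν) := by
    intro ν ρ
    have h1 := hanti ρ ν β
    rw [hσ_anti ν β, hσ_anti ρ β] at h1
    simp only [mul_neg, neg_mul] at h1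
    rw [← sub_eq_zero, ← neg_eq_zero, ← h1]
    abel
  simp_rw [h]
  -- Exchanging the two summation indices turns the sum into its own negative.
  have hneg : ∑ ν, ∑ ρ, ginv ν ρ • (γ ρ * σ β ν + σ β ν * γ ρ)
      = -∑ ν, ∑ ρ, ginv ν ρ • (γ ρ * σ β ν + σ β ν * γ ρ) := by
    conv_lhs => rw [Finset.sum_comm]
    simp_rw [← Finset.sum_neg_distrib, ← smul_neg]
    exact Finset.sum_congr rfl fun ν _ => Finset.sum_congr rfl fun ρ _ => by
      rw [hsymm ρ ν, hA ρ ν]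
  have h2 := eq_neg_iff_add_eq_zero.mp hneg
  rw [← two_smul ℂ] at h2
  exact (smul_eq_zero.mp h2).resolve_left two_ne_zero

theorem stmt_3
    (n N : ℕ) (hn : 1 ≤ n) (hN : 1 ≤ N)
    (g ginv : Fin n → Fin n → ℂ)
    (hg_symm : ∀ μ ν, g μ ν = g ν μ)
    (hg_inv : ∀ μ ν, ∑ κ, g μ κ * ginv κ ν = if μ = ν then (1 : ℂ) else 0)
    (hg_inv' : ∀ μ ν, ∑ κ, ginv μ κ * g κ ν = if μ = ν then (1 : ℂ) else 0)
    (γ : Fin n → Matrix (Fin N) (Fin N) ℂ)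
    (σ : Fin n → Fin n → Matrix (Fin N) (Fin N) ℂ)
    (hσ_anti : ∀ α β, σ α β = - σ β α)
    (hconst : ∀ μ s b, σ s b * γ μ - γ μ * σ s b = g μ b • γ s - g μ s • γ b)
    (hanti : ∀ μ s b, (γ μ * σ s b + σ s b * γ μ) + (γ s * σ μ b + σ μ b * γ s) = 0) :
    ∀ α β : Fin n,
      (((n : ℂ) - 1) / 2) • (γ β * γ α - γ α * γ β) =
        (∑ ν, σ β ν * ((∑ ρ, ginv ν ρ • γ ρ) * γ α - γ α * (∑ ρ, ginv ν ρ • γ ρ)))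
          + γ β * γ α - g α β • (∑ ν, γ ν * (∑ ρ, ginv ν ρ • γ ρ)) := by
  intro α β
  have hraise := sum_raise hg_inv γ α
  have hcomm := sum_commutator hg_inv' hconst β
  have hacomm := sum_anticommutator (ginv_symm hg_symm hg_inv) hσ_anti hanti β
  obtain ⟨γl, hγl⟩ : ∃ γl : Fin n → Matrix (Fin N) (Fin N) ℂ,
      ∀ ν, ∑ ρ, ginv ν ρ • γ ρ = γl ν := ⟨_, fun _ => rfl⟩
  simp only [hγl] at hraise hcomm hacomm ⊢
  have hS : ∑ ν, σ β ν * γl ν = (((n : ℂ) - 1) / 2) • γ β := by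
    rw [Finset.sum_sub_distrib] at hcomm
    rw [Finset.sum_add_distrib] at hacomm
    have h2 : (2 : ℂ) • ∑ ν, σ β ν * γl ν = ((n : ℂ) - 1) • γ β := by
      rw [← hcomm, eq_neg_of_add_eq_zero_right hacomm, two_smul, sub_neg_eq_add]
    rw [div_eq_inv_mul, mul_smul, ← h2, smul_smul]
    norm_num
  have hterm : ∀ ν, σ β ν * (γl ν * γ α - γ α * γl ν) =
      (σ β ν * γl ν) * γ α - γ α * (σ β ν * γl ν) - γ β * (g α ν • γl ν)
        + g α β • (γ ν * γl ν) := by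
    intro ν
    have h1 : σ β ν * γ α = γ α * σ β ν + (g α ν • γ β - g α β • γ ν) := by
      rw [← hconst]; abel
    rw [mul_sub, ← mul_assoc, ← mul_assoc, h1]
    simp only [add_mul, sub_mul, Matrix.smul_mul, Matrix.mul_smul, mul_assoc]
    abel
  simp_rw [hterm]
  rw [Finset.sum_add_distrib, Finset.sum_sub_distrib, Finset.sum_sub_distrib, ← Finset.sum_mul,
    ← Finset.mul_sum, ← Finset.mul_sum, ← Finset.smul_sum, hS, hraise, smul_sub,
    Matrix.smul_mul, Matrix.mul_smul]
  abel
end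

section
/- Under hypotheses (i) and (ii), for all α, β ∈ Fin n one has n·{γ^α, γ^β} = 2·g^{αβ}·(Σ_ν γ^ν·γ_ν), where the sum is over ν ∈ Fin n. -/
open Matrix BigOperators

/-!
Write `P^{αβ} = {γ^α, γ^β}` and `A^{μσβ} = {γ^μ, σ^{σβ}}`, which condition (ii) makes
antisymmetric in its first two indices. The commutator `[γ^λ, A^{μσβ}]` symmetrized in
`λ, μ` involves only `[σ^{σβ}, γ]`, so condition (i) expresses it through products `g · P`
(`comm_anticomm_symm`). That antisymmetry of `A` makes the cyclic sum over `λ, μ, σ` of these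
symmetrized commutators vanish (`cyclic_sum_eq_zero`), which gives
`g^{λσ} P^{μβ} + g^{μσ} P^{λβ} + g^{λμ} P^{σβ} = g^{λβ} P^{μσ} + g^{μβ} P^{λσ} + g^{σβ} P^{λμ}`.
Contracting with the inverse metric in `σ, β` cancels `2 P^{λμ}` on both sides and leaves
`g^{λμ} (ḡ_{σβ} P^{σβ}) = n P^{λμ}` (`contract`), where `ḡ_{σβ} P^{σβ} = 2 γ^ν γ_ν`.
-/

/-- Both sides equal `-({y, [z, x]} + {x, [z, y]})`: the terms `{[x, y], z}` and `{[y, x], z}`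
cancel in the symmetrization. -/
lemma comm_anticomm_symm {R : Type*} [Ring R] (x y z u v : R)
    (hu : z * x - x * z = u) (hv : z * y - y * z = v) :
    (x * (y * z + z * y) - (y * z + z * y) * x) + (y * (x * z + z * x) - (x * z + z * x) * y) =
      -((y * u + u * y) + (x * v + v * x)) := by
  subst hu hv
  noncomm_ring

/-- A function `B` of four indices that is antisymmetric under exchange of its middle two
has vanishing cyclic sum of its symmetrization in the first two. -/
lemma cyclic_sum_eq_zero {ι M : Type*} [AddCommGroup M] (B : ι → ι → ι → ι → M)
    (h : ∀ l m s b, B l m s b + B l s m b = 0) (l m s b : ι) :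
    (B l m s b + B m l s b) + (B m s l b + B s m l b) + (B s l m b + B l s m b) = 0 := by
  have h1 := h l m s b
  have h2 := h m l s b
  have h3 := h s l m b
  calc _ = (B l m s b + B l s m b) + (B m l s b + B m s l b) + (B s l m b + B s m l b) := by abel
    _ = 0 := by rw [h1, h2, h3]; simp

/-- The contraction of the four-index identity with the inverse metric in its last two
indices. -/
lemma contract {n : ℕ} {V : Type*} [AddCommGroup V] [Module ℂ V]
    (g ginv : Fin n → Fin n → ℂ) (hg_symm : ∀ μ ν, g μ ν = g ν μ)
    (hg_inv : ∀ μ ν, ∑ κ, g μ κ * ginv κ ν = if μ = ν then (1 : ℂ) else 0)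
    (hg_inv' : ∀ μ ν, ∑ κ, ginv μ κ * g κ ν = if μ = ν then (1 : ℂ) else 0)
    (P : Fin n → Fin n → V)
    (h : ∀ l m s b, g l s • P m b + g m s • P l b + g l m • P s b =
      g l b • P m s + g m b • P l s + g s b • P l m) (l m : Fin n) :
    (n : ℂ) • P l m = g l m • ∑ s, ∑ b, ginv s b • P s b := by
  have t : ∀ l s, ∑ b, ginv s b * g l b = if s = l then (1 : ℂ) else 0 := by
    intro l s
    rw [← hg_inv']
    exact Finset.sum_congr rfl fun b _ => by rw [hg_symm l b]
  have c1 : ∀ l m, ∑ s, ∑ b, (ginv s b * g l s) • P m b = P m l := by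
    intro l m
    rw [Finset.sum_comm]
    simp_rw [mul_comm (ginv _ _), ← Finset.sum_smul, hg_inv]
    simp
  have c2 : ∀ l m, ∑ s, ∑ b, (ginv s b * g l b) • P m s = P m l := by
    intro l m
    simp_rw [← Finset.sum_smul, t]
    simp
  have c3 : ∑ s, ∑ b, (ginv s b * g s b) • P l m = (n : ℂ) • P l m := by
    simp_rw [← Finset.sum_smul, t]
    simp
  have c4 : ∑ s, ∑ b, (ginv s b * g l m) • P s b = g l m • ∑ s, ∑ b, ginv s b • P s b := by
    simp_rw [Finset.smul_sum, smul_smul, mul_comm]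
  have key : ∑ s, ∑ b, ginv s b • (g l s • P m b + g m s • P l b + g l m • P s b) =
      ∑ s, ∑ b, ginv s b • (g l b • P m s + g m b • P l s + g s b • P l m) := by
    exact Finset.sum_congr rfl fun s _ => Finset.sum_congr rfl fun b _ => by rw [h]
  simp_rw [smul_add, smul_smul, Finset.sum_add_distrib] at key
  rw [c1, c1, c2, c2, c3, c4] at key
  exact (add_left_cancel key).symm

theorem stmt_5
    (n N : ℕ) (hn : 1 ≤ n) (hN : 1 ≤ N)
    (g ginv : Fin n → Fin n → ℂ)
    (hg_symm : ∀ μ ν, g μ ν = g ν μ)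
    (hg_inv : ∀ μ ν, ∑ κ, g μ κ * ginv κ ν = if μ = ν then (1 : ℂ) else 0)
    (hg_inv' : ∀ μ ν, ∑ κ, ginv μ κ * g κ ν = if μ = ν then (1 : ℂ) else 0)
    (γ : Fin n → Matrix (Fin N) (Fin N) ℂ)
    (σ : Fin n → Fin n → Matrix (Fin N) (Fin N) ℂ)
    (hσ_anti : ∀ α β, σ α β = - σ β α)
    (hconst : ∀ μ s b, σ s b * γ μ - γ μ * σ s b = g μ b • γ s - g μ s • γ b)
    (hanti : ∀ μ s b, (γ μ * σ s b + σ s b * γ μ) + (γ s * σ μ b + σ μ b * γ s) = 0) :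
    ∀ α β : Fin n,
      (n : ℂ) • (γ α * γ β + γ β * γ α) =
        (2 * g α β) • (∑ ν, γ ν * (∑ ρ, ginv ν ρ • γ ρ)) := by
  have e : ∀ l m s b, g l s • (γ m * γ b + γ b * γ m) + g m s • (γ l * γ b + γ b * γ l) +
        g l m • (γ s * γ b + γ b * γ s) =
      g l b • (γ m * γ s + γ s * γ m) + g m b • (γ l * γ s + γ s * γ l) +
        g s b • (γ l * γ m + γ m * γ l) := by
    intro l m s b
    have hc := cyclic_sum_eq_zero (fun l m s b => γ l * (γ m * σ s b + σ s b * γ m) -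
      (γ m * σ s b + σ s b * γ m) * γ l) (fun l m s b => by
        have := congrArg (fun X => γ l * X - X * γ l) (hanti m s b)
        simp only [mul_zero, zero_mul, sub_zero, mul_add, add_mul] at this ⊢
        rw [← this]; abel) l m s b
    beta_reduce at hc
    rw [comm_anticomm_symm _ _ _ _ _ (hconst l s b) (hconst m s b),
      comm_anticomm_symm _ _ _ _ _ (hconst m l b) (hconst s l b),
      comm_anticomm_symm _ _ _ _ _ (hconst s m b) (hconst l m b)] at hc
    simp only [mul_sub, sub_mul, mul_smul_comm, smul_mul_assoc] at hc
    rw [hg_symm s l, hg_symm s m, hg_symm m l] at hc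
    linear_combination (norm := module) (1 / 2 : ℂ) • hc
  have hQ : ∑ s, ∑ b, ginv s b • (γ s * γ b + γ b * γ s) =
      (2 : ℂ) • ∑ ν, γ ν * (∑ ρ, ginv ν ρ • γ ρ) := by
    -- The inverse of a symmetric metric is symmetric, so both orderings contribute equally.
    have hs : ∀ a b, ginv a b = ginv b a := by
      have h1 : (of g) * (of ginv) = 1 := by
        ext a b; simp [mul_apply, hg_inv, one_apply]
      have hT : (of g)ᵀ = of g := by ext a b; exact hg_symm b a
      have h2 : (of ginv)ᵀ * of g = 1 := by
        rw [← hT, ← transpose_mul, h1, transpose_one]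
      have h3 := left_inv_eq_right_inv h2 h1
      intro a b
      exact (congrFun (congrFun h3 b) a)
    have h5 : ∑ s, ∑ b, ginv s b • (γ b * γ s) = ∑ s, ∑ b, ginv s b • (γ s * γ b) := by
      rw [Finset.sum_comm]
      exact Finset.sum_congr rfl fun b _ => Finset.sum_congr rfl fun s _ => by rw [hs s b]
    simp_rw [smul_add, Finset.sum_add_distrib, h5, Finset.mul_sum, mul_smul_comm, two_smul]
  intro α β
  rw [contract g ginv hg_symm hg_inv hg_inv' (fun a b => γ a * γ b + γ b * γ a)
    e α β, hQ, smul_smul, mul_comm]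
end

section
/- Under hypotheses (i) and (ii), define A := (1/n)·Σ_ν γ^ν·γ_ν (sum over ν ∈ Fin n). Then A commutes with every σ-matrix: [A, σ^{βν}] = 0 for all β, ν ∈ Fin n. -/
/-!
The commutator with `σ s b` is a derivation which, by the constancy condition, acts on the `γ μ` as
the infinitesimal rotation `γ μ ↦ g μ b • γ s - g μ s • γ b`. On the lowered family
`L ν = ∑ ρ, ginv ν ρ • γ ρ` it therefore acts by `L ν ↦ δ_ν^b • γ s - δ_ν^s • γ b`, so by the
Leibniz rule the commutator with `∑ ν, γ ν * L ν` is
`(γ s * γ b - γ b * γ s) + (γ b * γ s - γ s * γ b) = 0`.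
-/

open Matrix BigOperators

theorem stmt_8
    (n N : ℕ) (hn : 1 ≤ n) (hN : 1 ≤ N)
    (g ginv : Fin n → Fin n → ℂ)
    (hg_symm : ∀ μ ν, g μ ν = g ν μ)
    (hg_inv : ∀ μ ν, ∑ κ, g μ κ * ginv κ ν = if μ = ν then (1 : ℂ) else 0)
    (hg_inv' : ∀ μ ν, ∑ κ, ginv μ κ * g κ ν = if μ = ν then (1 : ℂ) else 0)
    (γ : Fin n → Matrix (Fin N) (Fin N) ℂ)
    (σ : Fin n → Fin n → Matrix (Fin N) (Fin N) ℂ)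
    (hσ_anti : ∀ α β, σ α β = - σ β α)
    (hconst : ∀ μ s b, σ s b * γ μ - γ μ * σ s b = g μ b • γ s - g μ s • γ b)
    (hanti : ∀ μ s b, (γ μ * σ s b + σ s b * γ μ) + (γ s * σ μ b + σ μ b * γ s) = 0)
    (A : Matrix (Fin N) (Fin N) ℂ)
    (hA : A = ((1 : ℂ) / n) • ∑ ν, γ ν * (∑ ρ, ginv ν ρ • γ ρ)) :
    ∀ β ν : Fin n,
      A * σ β ν - σ β ν * A = 0 := by
  intro s b
  set L : Fin n → Matrix (Fin N) (Fin N) ℂ := fun ν => ∑ ρ, ginv ν ρ • γ ρ with hL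
  have hraise : ∀ c, ∑ ν, g ν c • L ν = γ c := by
    intro c
    simp only [hL, Finset.smul_sum, smul_smul]
    rw [Finset.sum_comm]
    simp only [← Finset.sum_smul, hg_symm _ c, hg_inv, ite_smul, one_smul, zero_smul,
      Finset.sum_ite_eq, Finset.mem_univ, if_true]
  have hcommL : ∀ ν, σ s b * L ν - L ν * σ s b =
      (if ν = b then (1 : ℂ) else 0) • γ s - (if ν = s then (1 : ℂ) else 0) • γ b := by
    intro ν
    simp only [hL, Finset.mul_sum, Finset.sum_mul, mul_smul_comm, smul_mul_assoc,
      ← Finset.sum_sub_distrib, ← smul_sub, hconst]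
    simp only [smul_sub, smul_smul, Finset.sum_sub_distrib, ← Finset.sum_smul, hg_inv']
  have hcomm : σ s b * (∑ ν, γ ν * L ν) - (∑ ν, γ ν * L ν) * σ s b = 0 := by
    have hleib : ∀ ν, σ s b * (γ ν * L ν) - γ ν * L ν * σ s b =
        (g ν b • (γ s * L ν) - g ν s • (γ b * L ν)) +
          ((if ν = b then γ ν * γ s else 0) - (if ν = s then γ ν * γ b else 0)) := by
      intro ν
      calc σ s b * (γ ν * L ν) - γ ν * L ν * σ s b
          = (σ s b * γ ν - γ ν * σ s b) * L ν + γ ν * (σ s b * L ν - L ν * σ s b) := by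
            noncomm_ring
        _ = _ := by
            rw [hconst, hcommL]
            simp [sub_mul, mul_sub]
    rw [Finset.mul_sum, Finset.sum_mul, ← Finset.sum_sub_distrib]
    simp only [hleib, Finset.sum_add_distrib, Finset.sum_sub_distrib, ← mul_smul_comm,
      ← Finset.mul_sum, hraise, Finset.sum_ite_eq', Finset.mem_univ, if_true]
    abel
  rw [hA, smul_mul_assoc, mul_smul_comm, ← smul_sub, ← neg_sub, hcomm, neg_zero, smul_zero]
end

section
/- Under hypotheses (i) and (ii), define A := (1/n)·Σ_ν γ^ν·γ_ν (sum over ν ∈ Fin n). Then A commutes with every γ-matrix: [γ^μ, A] = 0 for all μ ∈ Fin n. -/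
/-!
Write `γ_ν = ∑ ρ, ginv ν ρ • γ ρ` for the lowered matrices and `B = ∑ ν, γ^ν γ_ν`, so `A = B / n`.
Contracting total antisymmetry with the symmetric array `ginv` gives `∑ s, {γ_s, σ^{sb}} = 0`, while
contracting the constancy condition gives `∑ s, [σ^{sb}, γ_s] = (1 - n) γ^b`; together
`2 ∑ s, γ_s σ^{sb} = (n - 1) γ^b = -2 ∑ s, σ^{sb} γ_s` (`two_lower_mul_sigma`, `two_sigma_mul_lower`).
Multiplying the antisymmetry condition on the left by `γ_μ`, summing over `μ` and using constancy
to bring each term to the form `γ_μ γ^μ σ` or `γ_μ σ^{μb} γ^s` yields `n γ^b γ^s = g^{sb} B - 2 B σ^{sb}` (`mul_gamma_gamma`).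
Multiplying this on the right by `γ_s` and summing over `s` evaluates to
`n γ^b B = B γ^b + (n - 1) B γ^b = n B γ^b`.
-/

open Matrix BigOperators

namespace GammaAlgebra

variable {n N : ℕ} {g ginv : Fin n → Fin n → ℂ}
  {γ : Fin n → Matrix (Fin N) (Fin N) ℂ} {σ : Fin n → Fin n → Matrix (Fin N) (Fin N) ℂ}

/-- The lowered family `γ_ν = ∑ ρ, ginv ν ρ • γ^ρ`. -/
def lower (ginv : Fin n → Fin n → ℂ) (γ : Fin n → Matrix (Fin N) (Fin N) ℂ) (ν : Fin n) :
    Matrix (Fin N) (Fin N) ℂ :=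
  ∑ ρ, ginv ν ρ • γ ρ

theorem inv_symm (hg_symm : ∀ μ ν, g μ ν = g ν μ)
    (hg_inv : ∀ μ ν, ∑ κ, g μ κ * ginv κ ν = if μ = ν then (1 : ℂ) else 0)
    (hg_inv' : ∀ μ ν, ∑ κ, ginv μ κ * g κ ν = if μ = ν then (1 : ℂ) else 0) (μ ν : Fin n) :
    ginv μ ν = ginv ν μ := by
  have h1 : Matrix.of g * Matrix.of ginv = 1 := by
    ext i j
    simp [Matrix.mul_apply, Matrix.one_apply, hg_inv]
  have h2 : Matrix.of ginv * Matrix.of g = 1 := by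
    ext i j
    simp [Matrix.mul_apply, Matrix.one_apply, hg_inv']
  have hs : (Matrix.of g)ᵀ = Matrix.of g := by
    ext i j
    simp [hg_symm i j]
  have h3 : Matrix.of g * (Matrix.of ginv)ᵀ = 1 := by
    have := congrArg Matrix.transpose h2
    rwa [Matrix.transpose_mul, hs, Matrix.transpose_one] at this
  exact congrArg (fun M : Matrix (Fin n) (Fin n) ℂ => M μ ν) (left_inv_eq_right_inv h2 h3)

theorem sum_smul_lower
    (hg_inv : ∀ μ ν, ∑ κ, g μ κ * ginv κ ν = if μ = ν then (1 : ℂ) else 0) (μ : Fin n) :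
    ∑ κ, g μ κ • lower ginv γ κ = γ μ := by
  simp only [lower, Finset.smul_sum, smul_smul]
  rw [Finset.sum_comm]
  simp [← Finset.sum_smul, hg_inv]

/-- A contraction may be evaluated with the metric on either factor. -/
theorem sum_lower_mul (hsymm : ∀ μ ν, ginv μ ν = ginv ν μ)
    (X : Fin n → Matrix (Fin N) (Fin N) ℂ) :
    ∑ μ, lower ginv γ μ * X μ = ∑ μ, γ μ * lower ginv X μ := by
  simp only [lower, Finset.sum_mul, Finset.mul_sum, smul_mul_assoc, mul_smul_comm]
  rw [Finset.sum_comm]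
  simp only [hsymm]

theorem sigma_lower
    (hg_inv' : ∀ μ ν, ∑ κ, ginv μ κ * g κ ν = if μ = ν then (1 : ℂ) else 0)
    (hconst : ∀ μ s b, σ s b * γ μ - γ μ * σ s b = g μ b • γ s - g μ s • γ b) (μ s b : Fin n) :
    σ s b * lower ginv γ μ - lower ginv γ μ * σ s b
      = (if μ = b then (1 : ℂ) else 0) • γ s - (if μ = s then (1 : ℂ) else 0) • γ b := by
  rw [← hg_inv', ← hg_inv']
  simp only [lower, Finset.sum_mul, Finset.mul_sum, smul_mul_assoc, mul_smul_comm,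
    ← Finset.sum_sub_distrib, ← smul_sub, hconst, Finset.sum_smul, mul_smul]

theorem sum_commutator
    (hg_inv' : ∀ μ ν, ∑ κ, ginv μ κ * g κ ν = if μ = ν then (1 : ℂ) else 0)
    (hconst : ∀ μ s b, σ s b * γ μ - γ μ * σ s b = g μ b • γ s - g μ s • γ b) (b : Fin n) :
    ∑ s, σ s b * lower ginv γ s - ∑ s, lower ginv γ s * σ s b = (1 - (n : ℂ)) • γ b := by
  rw [← Finset.sum_sub_distrib]
  simp only [sigma_lower hg_inv' hconst]
  simp [Finset.sum_sub_distrib, sub_smul, Nat.cast_smul_eq_nsmul]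

theorem sum_anticommutator (hsymm : ∀ μ ν, ginv μ ν = ginv ν μ)
    (hanti : ∀ μ s b, (γ μ * σ s b + σ s b * γ μ) + (γ s * σ μ b + σ μ b * γ s) = 0)
    (b : Fin n) :
    ∑ s, σ s b * lower ginv γ s + ∑ s, lower ginv γ s * σ s b = 0 := by
  set T : Matrix (Fin N) (Fin N) ℂ :=
    ∑ s, ∑ μ, ginv s μ • (γ μ * σ s b + σ s b * γ μ) with hT
  have h1 : ∑ s, σ s b * lower ginv γ s + ∑ s, lower ginv γ s * σ s b = T := by
    simp only [hT, lower, Finset.sum_mul, Finset.mul_sum, smul_mul_assoc, mul_smul_comm,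
      smul_add, Finset.sum_add_distrib]
    exact add_comm _ _
  have h2 : T = ∑ s, ∑ μ, ginv s μ • (γ s * σ μ b + σ μ b * γ s) := by
    rw [hT, Finset.sum_comm]
    exact Finset.sum_congr rfl fun i _ => Finset.sum_congr rfl fun j _ => by rw [hsymm]
  have h3 : T + T = 0 := by
    nth_rewrite 2 [h2]
    simp only [hT, ← Finset.sum_add_distrib, ← smul_add, hanti, smul_zero, Finset.sum_const_zero]
  rw [h1]
  rw [← two_smul ℂ] at h3
  exact (smul_eq_zero.mp h3).resolve_left two_ne_zero

theorem two_sigma_mul_lower (hsymm : ∀ μ ν, ginv μ ν = ginv ν μ)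
    (hg_inv' : ∀ μ ν, ∑ κ, ginv μ κ * g κ ν = if μ = ν then (1 : ℂ) else 0)
    (hconst : ∀ μ s b, σ s b * γ μ - γ μ * σ s b = g μ b • γ s - g μ s • γ b)
    (hanti : ∀ μ s b, (γ μ * σ s b + σ s b * γ μ) + (γ s * σ μ b + σ μ b * γ s) = 0)
    (b : Fin n) :
    (2 : ℂ) • ∑ s, σ s b * lower ginv γ s = (1 - (n : ℂ)) • γ b := by
  have h1 := sum_commutator hg_inv' hconst b
  have h2 := sum_anticommutator hsymm hanti b
  linear_combination (norm := module) h1 + h2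

theorem two_lower_mul_sigma (hsymm : ∀ μ ν, ginv μ ν = ginv ν μ)
    (hg_inv' : ∀ μ ν, ∑ κ, ginv μ κ * g κ ν = if μ = ν then (1 : ℂ) else 0)
    (hconst : ∀ μ s b, σ s b * γ μ - γ μ * σ s b = g μ b • γ s - g μ s • γ b)
    (hanti : ∀ μ s b, (γ μ * σ s b + σ s b * γ μ) + (γ s * σ μ b + σ μ b * γ s) = 0)
    (b : Fin n) :
    (2 : ℂ) • ∑ s, lower ginv γ s * σ s b = ((n : ℂ) - 1) • γ b := by
  have h1 := sum_commutator hg_inv' hconst b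
  have h2 := sum_anticommutator hsymm hanti b
  linear_combination (norm := module) h2 - h1

/-- The product of two `γ`-matrices in terms of `B = ∑ ν, γ^ν γ_ν` and `σ`. -/
theorem mul_gamma_gamma (hg_symm : ∀ μ ν, g μ ν = g ν μ)
    (hg_inv : ∀ μ ν, ∑ κ, g μ κ * ginv κ ν = if μ = ν then (1 : ℂ) else 0)
    (hg_inv' : ∀ μ ν, ∑ κ, ginv μ κ * g κ ν = if μ = ν then (1 : ℂ) else 0)
    (hconst : ∀ μ s b, σ s b * γ μ - γ μ * σ s b = g μ b • γ s - g μ s • γ b)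
    (hanti : ∀ μ s b, (γ μ * σ s b + σ s b * γ μ) + (γ s * σ μ b + σ μ b * γ s) = 0)
    (s b : Fin n) :
    (n : ℂ) • (γ b * γ s) = g s b • (∑ ν, γ ν * lower ginv γ ν)
      - (2 : ℂ) • ((∑ ν, γ ν * lower ginv γ ν) * σ s b) := by
  have hsymm := inv_symm hg_symm hg_inv hg_inv'
  rw [← sum_lower_mul hsymm γ]
  have key : ∀ μ, (2 : ℂ) • (lower ginv γ μ * γ μ * σ s b)
      + ((g b μ • lower ginv γ μ) * γ s - (g s μ • lower ginv γ μ) * γ b)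
      + ((2 : ℂ) • (lower ginv γ μ * σ μ b * γ s) - g s b • (lower ginv γ μ * γ μ)
        + (g s μ • lower ginv γ μ) * γ b) = 0 := by
    intro μ
    have h1 : σ s b * γ μ = γ μ * σ s b + (g b μ • γ s - g s μ • γ b) := by
      rw [hg_symm b μ, hg_symm s μ, ← hconst]; abel
    have h2 : γ s * σ μ b = σ μ b * γ s - (g s b • γ μ - g s μ • γ b) := by
      rw [← hconst]; abel
    have h := congrArg (lower ginv γ μ * ·) (hanti μ s b)
    simp only [h1, h2, mul_add, mul_sub, mul_zero, mul_smul_comm, ← mul_assoc] at h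
    simp only [smul_mul_assoc]
    rw [← h]
    module
  have hsum := Finset.sum_eq_zero fun μ (_ : μ ∈ Finset.univ) => key μ
  simp only [Finset.sum_add_distrib, Finset.sum_sub_distrib, ← Finset.smul_sum, ← Finset.sum_mul,
    sum_smul_lower hg_inv] at hsum
  rw [← smul_mul_assoc _ (∑ i, lower ginv γ i * σ i b),
    two_lower_mul_sigma hsymm hg_inv' hconst hanti b, smul_mul_assoc] at hsum
  linear_combination (norm := module) hsum

end GammaAlgebra

open GammaAlgebra in
theorem stmt_9
    (n N : ℕ) (hn : 1 ≤ n) (hN : 1 ≤ N)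
    (g ginv : Fin n → Fin n → ℂ)
    (hg_symm : ∀ μ ν, g μ ν = g ν μ)
    (hg_inv : ∀ μ ν, ∑ κ, g μ κ * ginv κ ν = if μ = ν then (1 : ℂ) else 0)
    (hg_inv' : ∀ μ ν, ∑ κ, ginv μ κ * g κ ν = if μ = ν then (1 : ℂ) else 0)
    (γ : Fin n → Matrix (Fin N) (Fin N) ℂ)
    (σ : Fin n → Fin n → Matrix (Fin N) (Fin N) ℂ)
    (hσ_anti : ∀ α β, σ α β = - σ β α)
    (hconst : ∀ μ s b, σ s b * γ μ - γ μ * σ s b = g μ b • γ s - g μ s • γ b)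
    (hanti : ∀ μ s b, (γ μ * σ s b + σ s b * γ μ) + (γ s * σ μ b + σ μ b * γ s) = 0)
    (A : Matrix (Fin N) (Fin N) ℂ)
    (hA : A = ((1 : ℂ) / n) • ∑ ν, γ ν * (∑ ρ, ginv ν ρ • γ ρ)) :
    ∀ μ : Fin n,
      γ μ * A - A * γ μ = 0 := by
  intro μ
  have hsymm := inv_symm hg_symm hg_inv hg_inv'
  have hn0 : (n : ℂ) ≠ 0 := by exact_mod_cast (by omega : n ≠ 0)
  have hA' : A = ((1 : ℂ) / n) • ∑ ν, γ ν * lower ginv γ ν := hA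
  have hmul := mul_gamma_gamma hg_symm hg_inv hg_inv' hconst hanti
  have hσ := two_sigma_mul_lower hsymm hg_inv' hconst hanti μ
  set B := ∑ ν, γ ν * lower ginv γ ν with hB
  have h1 : (n : ℂ) • (γ μ * B) = B * γ μ - B * ((2 : ℂ) • ∑ s, σ s μ * lower ginv γ s) := by
    calc (n : ℂ) • (γ μ * B) = ∑ s, ((n : ℂ) • (γ μ * γ s)) * lower ginv γ s := by
          simp only [hB, Finset.mul_sum, Finset.smul_sum, smul_mul_assoc, mul_assoc]
      _ = ∑ s, (B * (g μ s • lower ginv γ s)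
            - B * ((2 : ℂ) • (σ s μ * lower ginv γ s))) := by
          refine Finset.sum_congr rfl fun s _ => ?_
          rw [hmul, hg_symm s μ]
          simp only [sub_mul, smul_mul_assoc, mul_smul_comm, mul_assoc]
      _ = _ := by
          rw [Finset.sum_sub_distrib, ← Finset.mul_sum, ← Finset.mul_sum,
            sum_smul_lower hg_inv, Finset.smul_sum]
  rw [hσ, mul_smul_comm] at h1
  have h2 : (n : ℂ) • (γ μ * B) = (n : ℂ) • (B * γ μ) := by
    linear_combination (norm := module) h1
  have h3 : γ μ * B = B * γ μ := smul_right_injective _ hn0 h2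
  rw [hA', mul_smul_comm, smul_mul_assoc, h3, sub_self]
end

section
/- Assume n ≠ 2, σ satisfies the Lorentz algebra relations, and σ^{μα}·σ^{ρβ} + σ^{μρ}·σ^{αβ} = 0 for all μ, α, ρ, β ∈ Fin n. Then σ is trivial: σ^{αβ} = 0 for all α, β ∈ Fin n. -/
open Matrix BigOperators

/-!
The products `σ^{μα} σ^{ρβ}` are antisymmetric under `μ ↔ α`, `ρ ↔ β` and (by hypothesis) `α ↔ ρ`,
hence totally antisymmetric in the four indices. Exchanging the pairs `(μ, α)` and `(ρ, β)` is an
even permutation, so all the `σ^{αβ}` commute and the right-hand side of the Lorentz relations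
vanishes. Contracting it with the inverse metric over one index of each pair gives
`(n - 2) σ^{αν} = g^{να} T` with `T` independent of `α` and `ν`. The left-hand side is antisymmetric
and the right-hand side symmetric, so `2 (n - 2) σ^{αν} = 0`.
-/

/-- The contraction of the Lorentz structure constants with the inverse metric, for a scalar-valued
array `s` (below, one matrix entry of `σ`). -/
lemma contraction_eq {n : ℕ} {g ginv s : Fin n → Fin n → ℂ}
    (hg_inv : ∀ μ ν, ∑ κ, g μ κ * ginv κ ν = if μ = ν then (1 : ℂ) else 0)
    (hg_inv' : ∀ μ ν, ∑ κ, ginv μ κ * g κ ν = if μ = ν then (1 : ℂ) else 0)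
    (hs : ∀ α β, s α β = -s β α)
    (h : ∀ α β μ ν, g μ β * s α ν - g μ α * s β ν + g ν β * s μ α - g ν α * s μ β = 0)
    (α ν : Fin n) :
    ((n : ℂ) - 2) * s α ν = g ν α * ∑ β, ∑ μ, ginv β μ * s μ β := by
  have h1 : ∑ β, ∑ μ, ginv β μ * g μ β * s α ν = n * s α ν := by
    simp_rw [← Finset.sum_mul, hg_inv']
    simp
  have h2 : ∑ β, ∑ μ, ginv β μ * g μ α * s β ν = s α ν := by
    simp_rw [← Finset.sum_mul, hg_inv']
    simp
  have h3 : ∑ β, ∑ μ, g ν β * ginv β μ * s μ α = s ν α := by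
    rw [Finset.sum_comm]
    simp_rw [← Finset.sum_mul, hg_inv]
    simp
  have h0 : ∑ β, ∑ μ, ginv β μ *
      (g μ β * s α ν - g μ α * s β ν + g ν β * s μ α - g ν α * s μ β) = 0 := by
    simp [h]
  have h4 : ∑ β, ∑ μ, ginv β μ *
      (g μ β * s α ν - g μ α * s β ν + g ν β * s μ α - g ν α * s μ β) =
      ∑ β, ∑ μ, ginv β μ * g μ β * s α ν - ∑ β, ∑ μ, ginv β μ * g μ α * s β ν +
      ∑ β, ∑ μ, g ν β * ginv β μ * s μ α - g ν α * ∑ β, ∑ μ, ginv β μ * s μ β := by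
    simp only [Finset.mul_sum, ← Finset.sum_add_distrib, ← Finset.sum_sub_distrib]
    refine Finset.sum_congr rfl fun β _ => Finset.sum_congr rfl fun μ _ => ?_
    ring
  rw [h0, h1, h2, h3] at h4
  linear_combination -h4 - hs ν α

theorem stmt_13
    (n N : ℕ) (hn : 1 ≤ n) (hN : 1 ≤ N)
    (g ginv : Fin n → Fin n → ℂ)
    (hg_symm : ∀ μ ν, g μ ν = g ν μ)
    (hg_inv : ∀ μ ν, ∑ κ, g μ κ * ginv κ ν = if μ = ν then (1 : ℂ) else 0)
    (hg_inv' : ∀ μ ν, ∑ κ, ginv μ κ * g κ ν = if μ = ν then (1 : ℂ) else 0)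
    (σ : Fin n → Fin n → Matrix (Fin N) (Fin N) ℂ)
    (hσ_anti : ∀ α β, σ α β = - σ β α)
    (hn2 : n ≠ 2)
    (hLorentz : ∀ α β μ ν, σ α β * σ μ ν - σ μ ν * σ α β =
      g μ β • σ α ν - g μ α • σ β ν + g ν β • σ μ α - g ν α • σ μ β)
    (hprod : ∀ μ α ρ β, σ μ α * σ ρ β + σ μ ρ * σ α β = 0) :
    ∀ α β : Fin n, σ α β = 0 := by
  have swap_left : ∀ a b c d, σ a b * σ c d = -(σ b a * σ c d) := fun a b c d => by
    rw [hσ_anti a b, neg_mul]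
  have swap_right : ∀ a b c d, σ a b * σ c d = -(σ a b * σ d c) := fun a b c d => by
    rw [hσ_anti c d, mul_neg]
  have swap_mid : ∀ a b c d, σ a b * σ c d = -(σ a c * σ b d) := fun a b c d =>
    eq_neg_of_add_eq_zero_left (hprod a b c d)
  have comm : ∀ a b c d, σ a b * σ c d = σ c d * σ a b := fun a b c d => by
    rw [swap_mid a b c d, swap_left a c b d, swap_right c a b d, swap_mid c a d b]
    simp
  intro α β
  ext i j
  have hs : ∀ α β, σ α β i j = -σ β α i j := fun α β => by
    rw [hσ_anti α β, Matrix.neg_apply]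
  have h : ∀ α β μ ν, g μ β * σ α ν i j - g μ α * σ β ν i j + g ν β * σ μ α i j
      - g ν α * σ μ β i j = 0 := fun α β μ ν => by
    have h := congrFun (congrFun (hLorentz α β μ ν) i) j
    rw [comm, sub_self] at h
    simpa using h.symm
  have e1 := contraction_eq (s := fun a b => σ a b i j) hg_inv hg_inv' hs h α β
  have e2 := contraction_eq (s := fun a b => σ a b i j) hg_inv hg_inv' hs h β α
  have hn2' : (n : ℂ) - 2 ≠ 0 := sub_ne_zero.mpr (by exact_mod_cast hn2)
  rw [hg_symm α β] at e2
  have e3 : ((n : ℂ) - 2) * σ α β i j = 0 := by 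
    linear_combination (e1 - e2) / 2 + ((n : ℂ) - 2) / 2 * hs α β
  simpa [hn2'] using e3
end
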